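/- arXiv:2108.06642 — 2 statements merged into one kernel-verified Lean document; each statement's English description precedes it below -/
import Mathlib

section
/- Let R be an Iwanaga-Gorenstein ring. Then ((P(R), R-Mod), (GP(R), P(R)^)) is a Hovey twin cotorsion pair on R-Mod, where P(R)^ is the class of left R-modules of finite projective dimension; that is, (P(R), R-Mod) and (GP(R), P(R)^) are cotorsion pairs on R-Mod, Ext^1_R(P, M) = 0 for every projective module P and every M ∈ P(R)^, and Cone(P(R)^, P(R)) = CoCone(P(R)^, P(R)). -/
/-!
The point is that injective modules have bounded projective dimension. Approximating a finitely
generated module on the left by a finite free module, taking the cokernel and iterating yields its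
*cosyzygies*, whose duals are syzygies of right modules. If `R` has injective dimension at most `m`
as a right module, an `(m + 2)`-nd cosyzygy is therefore torsionless, so it embeds in a finite free
module and every map from it to an injective module `E` factors through a finite free module. A
dimension shift turns this into: the `(m + 2)`-nd syzygy of `E` is flat, in the form that every map
into it from a finitely generated module factors through a finite free module.

If `F` is flat in this sense, every class in `Extʲ(M, F)` with `M` finitely generated comes from
some `Extʲ(M, Rᵏ)`, so by Baer's criterion the injective dimension of `F` is at most the left
self-injective dimension `n` of `R`. Syzygies of `F` are flat too, hence
`Extⁿ⁺¹(F, Ωⁿ⁺¹F) = 0` and `F` has projective dimension at most `n`.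

With a common bound `d` for the projective dimension of injectives and the injective dimension of
projectives, every `d`-th syzygy is left orthogonal to the projectives, and the `d`-th syzygy of an
embedding into an injective embeds it in a module of finite projective dimension. Salce's pushout
and pullback arguments transport the resulting approximations back to all modules. It follows that
the Gorenstein projectives are exactly the left orthogonal of the projectives, and that both
`Cone` and `CoCone` are the class of modules of finite projective dimension.
-/

open CategoryTheory CategoryTheory.Limits CategoryTheory.Abelian ZeroObject

universe w v u

namespace FrobeniusPaper

variable {C : Type u} [Category.{v} C] [Abelian C]

/-- `f, g` form a short exact sequence `0 → A → B → D → 0` in the abelian category `C`. -/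
def IsSES {A B D : C} (f : A ⟶ B) (g : B ⟶ D) : Prop :=
  ∃ w : f ≫ g = 0, (ShortComplex.mk f g w).ShortExact

/-- A "subcategory" in the sense of the paper: a full additive subcategory, regarded as the
predicate of membership for its objects, closed under isomorphisms and direct summands. -/
structure IsSubcat (X : C → Prop) : Prop where
  zero : X 0
  iso_closed : ∀ {A B : C}, (A ≅ B) → X A → X B
  biprod_closed : ∀ {A B : C}, X A → X B → X (A ⊞ B)
  summand_closed : ∀ {A M : C} (i : A ⟶ M) (p : M ⟶ A), i ≫ p = 𝟙 A → X M → X A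

/-- `Hat X n M` means `M ∈ X̂ₙ`, i.e. there is an exact sequence
`0 → Xₙ → ⋯ → X₁ → X₀ → M → 0` with all `Xᵢ ∈ X`. -/
def Hat (X : C → Prop) : ℕ → C → Prop
  | 0, M => X M
  | (n + 1), M => ∃ (K E : C) (f : K ⟶ E) (g : E ⟶ M), IsSES f g ∧ X E ∧ Hat X n K

/-- `M ∈ X̂ = ⋃ₙ X̂ₙ`. -/
def HatAll (X : C → Prop) (M : C) : Prop := ∃ n, Hat X n M

/-- `W` is a cogenerator for `X`. -/
def IsCogenerator (W X : C → Prop) : Prop :=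
  (∀ M, W M → X M) ∧
    ∀ M, X M → ∃ (W₀ X' : C) (f : M ⟶ W₀) (g : W₀ ⟶ X'), IsSES f g ∧ W W₀ ∧ X X'

/-- `W` is a generator for `X`. -/
def IsGenerator (W X : C → Prop) : Prop :=
  (∀ M, W M → X M) ∧
    ∀ M, X M → ∃ (X' W₀ : C) (f : X' ⟶ W₀) (g : W₀ ⟶ M), IsSES f g ∧ W W₀ ∧ X X'

/-- `X` is closed under extensions. -/
def ExtClosed (X : C → Prop) : Prop :=
  ∀ ⦃A B D : C⦄ (f : A ⟶ B) (g : B ⟶ D), IsSES f g → X A → X D → X B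

/-- `X` is closed under kernels of epimorphisms. -/
def KerEpiClosed (X : C → Prop) : Prop :=
  ∀ ⦃A B D : C⦄ (f : A ⟶ B) (g : B ⟶ D), IsSES f g → X B → X D → X A

/-- A thick subcategory: closed under direct summands and two-out-of-three for
short exact sequences. -/
def IsThickSub (T : C → Prop) : Prop :=
  IsSubcat T ∧ ∀ ⦃A B D : C⦄ (f : A ⟶ B) (g : B ⟶ D), IsSES f g →
    (T A → T B → T D) ∧ (T A → T D → T B) ∧ (T B → T D → T A)

/-- Membership in `Thick(X)`, the smallest thick subcategory containing `X`. -/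
def thickClosure (X : C → Prop) (M : C) : Prop :=
  ∀ T : C → Prop, IsThickSub T → (∀ N, X N → T N) → T M

variable [HasExt.{w} C]

/-- `Y ∈ X^⊥`, i.e. `Extⁱ(M, Y) = 0` for all `i ≥ 1` and `M ∈ X`. -/
def rightPerp (X : C → Prop) (Y : C) : Prop :=
  ∀ M, X M → ∀ i : ℕ, 1 ≤ i → Subsingleton (Abelian.Ext M Y i)

/-- A left Frobenius pair `(X, W)`. -/
structure LeftFrobenius (X W : C → Prop) : Prop where
  subX : IsSubcat X
  subW : IsSubcat W
  extClosed : ExtClosed X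
  kerEpiClosed : KerEpiClosed X
  cogen : IsCogenerator W X
  perp : ∀ M, W M → rightPerp X M

/-- A strong left Frobenius pair `(X, W)`. -/
structure StrongLeftFrobenius (X W : C → Prop) extends LeftFrobenius X W : Prop where
  gen : IsGenerator W X
  proj : ∀ M N, W M → X N → ∀ i : ℕ, 1 ≤ i → Subsingleton (Abelian.Ext M N i)

/-- A cotorsion pair `(U, V)` on an extension-closed subcategory `B` of `C`. -/
structure CotorsionPairOn (B U V : C → Prop) : Prop where
  subU : ∀ M, U M → B M
  subV : ∀ M, V M → B M
  isoU : ∀ {A B' : C}, (A ≅ B') → U A → U B'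
  summandU : ∀ {A M : C} (i : A ⟶ M) (p : M ⟶ A), i ≫ p = 𝟙 A → U M → U A
  isoV : ∀ {A B' : C}, (A ≅ B') → V A → V B'
  summandV : ∀ {A M : C} (i : A ⟶ M) (p : M ⟶ A), i ≫ p = 𝟙 A → V M → V A
  ext1 : ∀ M N, U M → V N → Subsingleton (Abelian.Ext M N 1)
  res : ∀ M, B M → ∃ (V₀ U₀ : C) (f : V₀ ⟶ U₀) (g : U₀ ⟶ M), IsSES f g ∧ U U₀ ∧ V V₀
  cores : ∀ M, B M → ∃ (V₀ U₀ : C) (f : M ⟶ V₀) (g : V₀ ⟶ U₀), IsSES f g ∧ U U₀ ∧ V V₀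

/-- `GClass X W M`: there exists a doubly infinite exact sequence
`⋯ → P₋₁ → P₀ → P₁ → ⋯` with all terms in `X`, with `M ≅ Ker(P₀ → P₁)`, and such that the
complex `Hom(P, Q)` is exact for every `Q ∈ W`. -/
def GClass (X W : C → Prop) (M : C) : Prop :=
  ∃ (P : ℤ → C) (d : ∀ n : ℤ, P n ⟶ P (n + 1)) (hd : ∀ n, d n ≫ d (n + 1) = 0),
    (∀ n, X (P n)) ∧
    (∀ n, (ShortComplex.mk (d n) (d (n + 1)) (hd n)).Exact) ∧
    Nonempty (M ≅ kernel (d 0)) ∧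
    (∀ Q : C, W Q → ∀ (n : ℤ) (ψ : P (n + 1) ⟶ Q), d n ≫ ψ = 0 →
      ∃ φ : P (n + 1 + 1) ⟶ Q, d (n + 1) ≫ φ = ψ)

/-- `Cone(V, S)`: objects `M` admitting a short exact sequence `0 → V₀ → S₀ → M → 0` with
`V₀ ∈ V` and `S₀ ∈ S`. -/
def ConeCls (V S : C → Prop) (M : C) : Prop :=
  ∃ (V₀ S₀ : C) (f : V₀ ⟶ S₀) (g : S₀ ⟶ M), IsSES f g ∧ V V₀ ∧ S S₀

/-- `CoCone(V, S)`: objects `M` admitting a short exact sequence `0 → M → V₀ → S₀ → 0` with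
`V₀ ∈ V` and `S₀ ∈ S`. -/
def CoConeCls (V S : C → Prop) (M : C) : Prop :=
  ∃ (V₀ S₀ : C) (f : M ⟶ V₀) (g : V₀ ⟶ S₀), IsSES f g ∧ V V₀ ∧ S S₀

/-- `CoHat I n M` : `M` admits a coresolution `0 → M → I₀ → ⋯ → Iₙ → 0` with all `Iⱼ ∈ I`;
in particular `∃ n, CoHat I n M` with `I` the injectives says `M` has finite injective
dimension. -/
def CoHat (I : C → Prop) : ℕ → C → Prop
  | 0, M => I M
  | (n + 1), M => ∃ (E K : C) (f : M ⟶ E) (g : E ⟶ K), IsSES f g ∧ I E ∧ CoHat I n K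

end FrobeniusPaper

namespace FrobeniusPaper

section Abelian

variable {C : Type u} [Category.{v} C] [Abelian C]

/-! ### Short exact sequences -/

section ShortExact

variable {A B D : C} {f : A ⟶ B} {g : B ⟶ D}

theorem isSES_of_lift [Mono f] [Epi g] (w : f ≫ g = 0)
    (h : ∀ (T : C) (t : T ⟶ B), t ≫ g = 0 → ∃ s : T ⟶ A, s ≫ f = t) : IsSES f g :=
  ⟨w, .mk' (ShortComplex.exact_of_f_is_kernel _ <| KernelFork.IsLimit.ofι' _ _
    fun t ht => ⟨(h _ t ht).choose, (h _ t ht).choose_spec⟩) ‹_› ‹_›⟩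

theorem isSES_of_desc [Mono f] [Epi g] (w : f ≫ g = 0)
    (h : ∀ (T : C) (t : B ⟶ T), f ≫ t = 0 → ∃ s : D ⟶ T, g ≫ s = t) : IsSES f g :=
  ⟨w, .mk' (ShortComplex.exact_of_g_is_cokernel _ <| CokernelCofork.IsColimit.ofπ' _ _
    fun t ht => ⟨(h _ t ht).choose, (h _ t ht).choose_spec⟩) ‹_› ‹_›⟩

theorem isSES_kernel_ι (g : B ⟶ D) [Epi g] : IsSES (kernel.ι g) g :=
  ⟨kernel.condition g, { exact := ShortComplex.exact_kernel g }⟩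

theorem isSES_cokernel_π (f : A ⟶ B) [Mono f] : IsSES f (cokernel.π f) :=
  ⟨cokernel.condition f, { exact := ShortComplex.exact_cokernel f }⟩

theorem isSES_id_zero (M : C) : IsSES (𝟙 M) (0 : M ⟶ 0) :=
  have : Epi (0 : M ⟶ 0) := (isZero_zero C).epi _
  isSES_of_lift comp_zero fun _ t _ => ⟨t, Category.comp_id t⟩

theorem exists_isSES_projective [EnoughProjectives C] (M : C) :
    ∃ (K P : C) (f : K ⟶ P) (g : P ⟶ M), IsSES f g ∧ Projective P :=
  ⟨_, _, _, _, isSES_kernel_ι (Projective.π M), inferInstance⟩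

theorem isSES_kernel_lift_of_exact {w : f ≫ g = 0} (h : (ShortComplex.mk f g w).Exact) :
    IsSES (kernel.ι f) (kernel.lift g f w) := by
  have : Epi (kernel.lift g f w) := (ShortComplex.exact_iff_epi_kernel_lift _).1 h
  refine isSES_of_lift ?_ fun T t ht => ⟨kernel.lift f t ?_, kernel.lift_ι _ _ _⟩
  · rw [← cancel_mono (kernel.ι g), Category.assoc, kernel.lift_ι, kernel.condition, zero_comp]
  · rw [← kernel.lift_ι g f w, reassoc_of% ht, zero_comp]

theorem IsSES.mono (h : IsSES f g) : Mono f := h.2.mono_f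

theorem IsSES.epi (h : IsSES f g) : Epi g := h.2.epi_g

theorem IsSES.exists_lift (h : IsSES f g) {T : C} (t : T ⟶ B) (ht : t ≫ g = 0) :
    ∃ s : T ⟶ A, s ≫ f = t :=
  have := h.mono
  ⟨h.2.exact.lift t ht, h.2.exact.lift_f t ht⟩

theorem IsSES.exists_desc (h : IsSES f g) {T : C} (t : B ⟶ T) (ht : f ≫ t = 0) :
    ∃ s : D ⟶ T, g ≫ s = t :=
  have := h.epi
  ⟨h.2.exact.desc t ht, h.2.exact.g_desc t ht⟩

variable {E W : C}

theorem IsSES.of_isPullback (h : IsSES f g) {q : W ⟶ B} {p : W ⟶ E} {e : E ⟶ D}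
    (sq : IsPullback q p g e) : ∃ i : A ⟶ W, IsSES i p := by
  have := h.mono
  have : Epi p := MorphismProperty.of_isPullback (P := .epimorphisms C) sq h.epi
  have w : f ≫ g = 0 ≫ e := by rw [h.1, zero_comp]
  have : Mono (sq.lift f 0 w) := mono_of_mono_fac (sq.lift_fst f 0 w)
  refine ⟨_, isSES_of_lift (sq.lift_snd f 0 w) fun T t ht => ?_⟩
  obtain ⟨s, hs⟩ := h.exists_lift (t ≫ q)
    (by rw [Category.assoc, sq.w, reassoc_of% ht, zero_comp])
  exact ⟨s, sq.hom_ext (by rw [Category.assoc, sq.lift_fst, hs])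
    (by rw [Category.assoc, sq.lift_snd, comp_zero, ht])⟩

theorem IsSES.of_isPushout (h : IsSES f g) {e : A ⟶ E} {i : E ⟶ W} {q : B ⟶ W}
    (sq : IsPushout e f i q) : ∃ p : W ⟶ D, IsSES i p := by
  have := h.epi
  have : Mono i := MorphismProperty.of_isPushout (P := .monomorphisms C) sq h.mono
  have w : e ≫ 0 = f ≫ g := by rw [h.1, comp_zero]
  have : Epi (sq.desc 0 g w) := epi_of_epi_fac (sq.inr_desc 0 g w)
  refine ⟨_, isSES_of_desc (sq.inl_desc 0 g w) fun T t ht => ?_⟩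
  obtain ⟨s, hs⟩ := h.exists_desc (q ≫ t)
    (by rw [← Category.assoc, ← sq.w, Category.assoc, ht, comp_zero])
  exact ⟨s, sq.hom_ext (by rw [sq.inl_desc_assoc, zero_comp, ht])
    (by rw [sq.inr_desc_assoc, hs])⟩

theorem IsSES.epi_comp_of_isPullback (h : IsSES f g) {p : W ⟶ A} {i : W ⟶ E} {e : E ⟶ B}
    [Epi e] (sq : IsPullback p i f e) : IsSES i (e ≫ g) := by
  have := h.epi
  have : Mono i := MorphismProperty.of_isPullback (P := .monomorphisms C) sq h.mono
  refine isSES_of_lift (by rw [← sq.w_assoc, h.1, comp_zero]) fun T t ht => ?_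
  obtain ⟨s, hs⟩ := h.exists_lift (t ≫ e) (by rw [Category.assoc, ht])
  exact ⟨sq.lift s t hs, sq.lift_snd s t hs⟩

theorem IsSES.exact_comp (h : IsSES f g)
    (a : E ⟶ A) [Epi a] (b : D ⟶ W) [Mono b] (w : (a ≫ f) ≫ g ≫ b = 0) :
    (ShortComplex.mk (a ≫ f) (g ≫ b) w).Exact := by
  have w' : (a ≫ f) ≫ g = 0 := by rw [Category.assoc, h.1, comp_zero]
  let φ : ShortComplex.mk (a ≫ f) g w' ⟶ ShortComplex.mk f g h.1 :=
    { τ₁ := a, τ₂ := 𝟙 B, τ₃ := 𝟙 D }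
  let ψ : ShortComplex.mk (a ≫ f) g w' ⟶ ShortComplex.mk (a ≫ f) (g ≫ b) w :=
    { τ₁ := 𝟙 E, τ₂ := 𝟙 B, τ₃ := b }
  exact (ShortComplex.exact_iff_of_epi_of_isIso_of_mono ψ).1
    ((ShortComplex.exact_iff_of_epi_of_isIso_of_mono φ).2 h.2.exact)

/-- The diagram chase behind the dimension shifts over a ring: the obstruction to extending maps
`A' ⟶ A` along `i` is the obstruction to lifting maps `D' ⟶ D` along `g`. -/
theorem IsSES.exists_extension_of_exact (h : IsSES f g) {A' B' D' : C} {i : A' ⟶ B'} {p : B' ⟶ D'}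
    {w : i ≫ p = 0} [Epi p] (hip : (ShortComplex.mk i p w).Exact)
    (hB : ∀ φ : A' ⟶ B, ∃ ψ : B' ⟶ B, i ≫ ψ = φ)
    (hD : ∀ χ : D' ⟶ D, ∃ χ' : D' ⟶ B, χ' ≫ g = χ) (φ : A' ⟶ A) :
    ∃ θ : B' ⟶ A, i ≫ θ = φ := by
  have := h.mono
  have : Epi (ShortComplex.mk i p w).g := ‹Epi p›
  obtain ⟨ψ, hψ⟩ := hB (φ ≫ f)
  obtain ⟨χ, hχ⟩ : ∃ χ : D' ⟶ D, p ≫ χ = ψ ≫ g :=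
    ⟨hip.desc (ψ ≫ g) (by rw [reassoc_of% hψ, h.1, comp_zero]), hip.g_desc _ _⟩
  obtain ⟨χ', rfl⟩ := hD χ
  obtain ⟨θ, hθ⟩ := h.exists_lift (ψ - p ≫ χ')
    (by rw [Preadditive.sub_comp, Category.assoc, hχ, sub_self])
  refine ⟨θ, (cancel_mono f).1 ?_⟩
  rw [Category.assoc, hθ, Preadditive.comp_sub, reassoc_of% w, zero_comp, sub_zero, hψ]

end ShortExact

/-! ### Finite projective and injective dimension -/

section Dimension

theorem Hat.hasProjectiveDimensionLT {n : ℕ} {M : C} (h : Hat Projective n M) :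
    HasProjectiveDimensionLT M (n + 1) := by
  induction n generalizing M with
  | zero => exact projective_iff_hasProjectiveDimensionLT_one.1 h
  | succ n ih =>
    obtain ⟨K, P, f, g, hs, hP, hK⟩ := h
    exact (hs.2.hasProjectiveDimensionLT_X₃_iff n hP).2 (ih hK)

theorem hat_of_hasProjectiveDimensionLT [EnoughProjectives C] {n : ℕ} {M : C}
    (h : HasProjectiveDimensionLT M (n + 1)) : Hat Projective n M := by
  induction n generalizing M with
  | zero => exact projective_iff_hasProjectiveDimensionLT_one.2 h
  | succ n ih =>
    obtain ⟨K, P, f, g, hs, hP⟩ := exists_isSES_projective M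
    exact ⟨K, P, f, g, hs, hP, ih ((hs.2.hasProjectiveDimensionLT_X₃_iff n hP).1 h)⟩

theorem hatAll_projective_iff [EnoughProjectives C] {M : C} :
    HatAll Projective M ↔ ∃ n, HasProjectiveDimensionLT M n :=
  ⟨fun ⟨_, h⟩ => ⟨_, h.hasProjectiveDimensionLT⟩, fun ⟨n, _⟩ =>
    ⟨n, hat_of_hasProjectiveDimensionLT (hasProjectiveDimensionLT_of_ge M n _ n.le_succ)⟩⟩

theorem HatAll.retract [EnoughProjectives C] {A M : C} (i : A ⟶ M) (p : M ⟶ A) (h : i ≫ p = 𝟙 A)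
    (hM : HatAll Projective M) : HatAll Projective A := by
  obtain ⟨n, hn⟩ := hatAll_projective_iff.1 hM
  exact hatAll_projective_iff.2 ⟨n, (Retract.mk i p h).hasProjectiveDimensionLT n⟩

theorem hatAll_projective_extClosed [EnoughProjectives C] :
    ExtClosed (C := C) (HatAll Projective) := by
  intro A B D f g h hA hD
  obtain ⟨n, hA⟩ := hatAll_projective_iff.1 hA
  obtain ⟨m, hD⟩ := hatAll_projective_iff.1 hD
  exact hatAll_projective_iff.2 ⟨n + m, h.2.hasProjectiveDimensionLT_X₂ _
    (hasProjectiveDimensionLT_of_ge A n _ (by lia))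
    (hasProjectiveDimensionLT_of_ge D m _ (by lia))⟩

theorem IsSES.hatAll_right [EnoughProjectives C] {A B D : C} {f : A ⟶ B} {g : B ⟶ D}
    (h : IsSES f g) (hA : HatAll Projective A) (hB : HatAll Projective B) :
    HatAll Projective D := by
  obtain ⟨n, hA⟩ := hatAll_projective_iff.1 hA
  obtain ⟨m, hB⟩ := hatAll_projective_iff.1 hB
  exact hatAll_projective_iff.2 ⟨n + m + 1, h.2.hasProjectiveDimensionLT_X₃ _
    (hasProjectiveDimensionLT_of_ge A n _ (by lia))
    (hasProjectiveDimensionLT_of_ge B m _ (by lia))⟩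

theorem hatAll_projective_kerEpiClosed [EnoughProjectives C] :
    KerEpiClosed (C := C) (HatAll Projective) := by
  intro A B D f g h hB hD
  obtain ⟨n, hB⟩ := hatAll_projective_iff.1 hB
  obtain ⟨m, hD⟩ := hatAll_projective_iff.1 hD
  exact hatAll_projective_iff.2 ⟨n + m, h.2.hasProjectiveDimensionLT_X₁ _
    (hasProjectiveDimensionLT_of_ge B n _ (by lia))
    (hasProjectiveDimensionLT_of_ge D m _ (by lia))⟩

theorem coneCls_hatAll_projective_iff [EnoughProjectives C] {M : C} :
    ConeCls (HatAll Projective) Projective M ↔ HatAll Projective M := by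
  refine ⟨fun ⟨V, P, f, g, hs, hV, hP⟩ => hs.hatAll_right hV ⟨0, hP⟩, fun hM => ?_⟩
  obtain ⟨K, P, f, g, hs, hP⟩ := exists_isSES_projective M
  exact ⟨K, P, f, g, hs, hatAll_projective_kerEpiClosed f g hs ⟨0, hP⟩ hM, hP⟩

theorem coConeCls_hatAll_projective_iff [EnoughProjectives C] {M : C} :
    CoConeCls (HatAll Projective) Projective M ↔ HatAll Projective M :=
  ⟨fun ⟨_, _, f, g, hs, hV, hP⟩ => hatAll_projective_kerEpiClosed f g hs hV ⟨0, hP⟩,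
    fun hM => ⟨M, 0, _, _, isSES_id_zero M, hM, Projective.zero_projective⟩⟩

theorem CoHat.hasInjectiveDimensionLT {n : ℕ} {M : C} (h : CoHat Injective n M) :
    HasInjectiveDimensionLT M (n + 1) := by
  induction n generalizing M with
  | zero => exact injective_iff_hasInjectiveDimensionLT_one.1 h
  | succ n ih =>
    obtain ⟨E, K, f, g, hs, hE, hK⟩ := h
    exact (hs.2.hasInjectiveDimensionLT_X₃_iff n hE).1 (ih hK)

end Dimension

/-! ### Syzygies and approximations -/

/-- `Syzygy k K`: the object `K` is a `k`-th syzygy of some object, with respect to arbitrary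
projective resolutions. -/
def Syzygy : ℕ → C → Prop
  | 0, _ => True
  | (k + 1), K => ∃ (P N : C) (f : K ⟶ P) (g : P ⟶ N), IsSES f g ∧ Projective P ∧ Syzygy k N

/-- The embedding is the `k`-th syzygy of an embedding into an injective, as in the horseshoe
lemma. -/
theorem Syzygy.exists_embedding [EnoughProjectives C] [EnoughInjectives C] {d : ℕ}
    (hI : ∀ E : C, Injective E → HasProjectiveDimensionLT E (d + 1))
    {k j : ℕ} (hkj : j + k = d) {K : C} (hK : Syzygy k K) :
    ∃ (B K' : C) (f : K ⟶ B) (g : B ⟶ K'), IsSES f g ∧ Syzygy k K' ∧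
      HasProjectiveDimensionLT B (j + 1) := by
  induction k generalizing K j with
  | zero =>
    obtain rfl : j = d := hkj
    exact ⟨_, _, _, _, isSES_cokernel_π (Injective.ι K), trivial, hI _ inferInstance⟩
  | succ k ih =>
    obtain ⟨P, N, f, g, hs, hP, hN⟩ := hK
    obtain ⟨B, N', f₁, g₁, hs₁, hN', hB⟩ := ih (j := j + 1) (by lia) hN
    obtain ⟨B₁, Q, f₂, g₂, hs₂, hQ⟩ := exists_isSES_projective B
    have := hs₂.epi
    have sq := IsPullback.of_hasPullback f₁ g₂
    obtain ⟨b, hB₁⟩ := hs₂.of_isPullback sq.flip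
    have sq' := IsPullback.of_hasPullback (pullback.fst f₁ g₂) g
    obtain ⟨i, hW⟩ := hB₁.of_isPullback sq'
    obtain ⟨r, hW'⟩ := hs.of_isPullback sq'.flip
    exact ⟨_, _, r, _, hW', ⟨Q, N', _, _, hs₁.epi_comp_of_isPullback sq, hQ, hN'⟩,
      hW.2.hasProjectiveDimensionLT_X₂ _ ((hs₂.2.hasProjectiveDimensionLT_X₃_iff j hQ).1 hB)
        (hasProjectiveDimensionLT_of_ge P 1 _ (by lia))⟩

section Approximation

variable {U V : C → Prop} {A B D : C} {f : A ⟶ B} {g : B ⟶ D}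

/-- One half of Salce's lemma; the other is `ConeCls.coConeCls`. -/
theorem CoConeCls.coneCls (hU : ExtClosed U) (hs : IsSES f g) (hB : U B)
    (h : CoConeCls V U A) : ConeCls V U D := by
  obtain ⟨V₀, U₀, a, b, hab, hV, hU₀⟩ := h
  have sq := IsPushout.of_hasPushout a f
  obtain ⟨p, h₁⟩ := hs.of_isPushout sq
  obtain ⟨q, h₂⟩ := hab.of_isPushout sq.flip
  exact ⟨V₀, _, _, p, h₁, hV, hU _ _ h₂ hB hU₀⟩

theorem ConeCls.coConeCls (hV : ExtClosed V) (hs : IsSES f g) (hB : V B)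
    (h : ConeCls V U D) : CoConeCls V U A := by
  obtain ⟨V₀, U₀, a, b, hab, hV₀, hU⟩ := h
  have sq := IsPullback.of_hasPullback g b
  obtain ⟨i, h₁⟩ := hs.of_isPullback sq
  obtain ⟨j, h₂⟩ := hab.of_isPullback sq.flip
  exact ⟨_, U₀, i, _, h₁, hV _ _ h₂ hV₀ hB, hU⟩

end Approximation

/-! ### Vanishing of Ext -/

variable [HasExt.{w} C]

section Ext

variable {A B D : C} {f : A ⟶ B} {g : B ⟶ D} {X Y : C} {i : ℕ}

theorem IsSES.ext_middle (h : IsSES f g) (hA : Subsingleton (Abelian.Ext A Y i))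
    (hD : Subsingleton (Abelian.Ext D Y i)) : Subsingleton (Abelian.Ext B Y i) := by
  refine subsingleton_of_forall_eq 0 fun x => ?_
  obtain ⟨y, rfl⟩ := Ext.contravariant_sequence_exact₂ h.2 _ x (hA.elim _ _)
  rw [hD.elim y 0, Ext.comp_zero]

theorem IsSES.ext_left (h : IsSES f g) (hB : Subsingleton (Abelian.Ext B Y i))
    (hD : Subsingleton (Abelian.Ext D Y (i + 1))) : Subsingleton (Abelian.Ext A Y i) := by
  refine subsingleton_of_forall_eq 0 fun x => ?_
  obtain ⟨y, rfl⟩ := Ext.contravariant_sequence_exact₁ h.2 _ x (add_comm 1 i) (hD.elim _ _)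
  rw [hB.elim y 0, Ext.comp_zero]

theorem IsSES.ext_right (h : IsSES f g) (hA : Subsingleton (Abelian.Ext A Y i))
    (hB : Subsingleton (Abelian.Ext B Y (i + 1))) : Subsingleton (Abelian.Ext D Y (i + 1)) := by
  refine subsingleton_of_forall_eq 0 fun x => ?_
  obtain ⟨y, rfl⟩ := Ext.contravariant_sequence_exact₃ h.2 _ x (hB.elim _ _) (add_comm 1 i)
  rw [hA.elim y 0, Ext.comp_zero]

theorem IsSES.ext_coeff_right (h : IsSES f g) (hB : Subsingleton (Abelian.Ext X B i))
    (hA : Subsingleton (Abelian.Ext X A (i + 1))) : Subsingleton (Abelian.Ext X D i) := by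
  refine subsingleton_of_forall_eq 0 fun x => ?_
  obtain ⟨y, rfl⟩ := Ext.covariant_sequence_exact₃ _ h.2 x rfl (hA.elim _ _)
  rw [hB.elim y 0, Ext.zero_comp]

theorem IsSES.exists_extension_of_ext_one (h : IsSES f g)
    (hD : Subsingleton (Abelian.Ext D Y 1)) (φ : A ⟶ Y) : ∃ ψ : B ⟶ Y, f ≫ ψ = φ := by
  obtain ⟨x, hx⟩ := Ext.contravariant_sequence_exact₁ h.2 Y (Ext.mk₀ φ) (add_zero 1)
    (hD.elim _ _)
  obtain ⟨ψ, rfl⟩ := Ext.homEquiv₀.symm.surjective x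
  exact ⟨ψ, Ext.homEquiv₀.symm.injective (by simpa using hx)⟩

theorem IsSES.ext_one_of_forall_extension (h : IsSES f g) (hB : Subsingleton (Abelian.Ext B Y 1))
    (hY : ∀ φ : A ⟶ Y, ∃ ψ : B ⟶ Y, f ≫ ψ = φ) : Subsingleton (Abelian.Ext D Y 1) := by
  refine subsingleton_of_forall_eq 0 fun x => ?_
  obtain ⟨y, rfl⟩ := Ext.contravariant_sequence_exact₃ h.2 Y x (hB.elim _ _) (add_zero 1)
  obtain ⟨φ, rfl⟩ := Ext.homEquiv₀.symm.surjective y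
  obtain ⟨ψ, rfl⟩ := hY φ
  have : Ext.homEquiv₀.symm (f ≫ ψ) = (Ext.mk₀ f).comp (Ext.mk₀ ψ) (zero_add 0) := by simp
  rw [this]
  exact h.2.extClass_comp_assoc (Ext.mk₀ ψ)

theorem IsSES.projective_of_ext_one (h : IsSES f g) (hB : Projective B)
    (hD : Subsingleton (Abelian.Ext D A 1)) : Projective D := by
  obtain ⟨r, hr⟩ := h.exists_extension_of_ext_one hD (𝟙 A)
  have := h.epi
  let S := ShortComplex.Splitting.ofExactOfRetraction _ h.2.exact r hr h.epi
  exact (Retract.mk S.s g S.s_g).projective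

end Ext

/-- The left Ext-orthogonal `⊥X`: the objects `M` with `Extⁱ(M, Y) = 0` for all `Y ∈ X` and
`i ≥ 1`. Dual to `rightPerp`. -/
def leftPerp (X : C → Prop) (M : C) : Prop :=
  ∀ Y, X Y → ∀ i : ℕ, 1 ≤ i → Subsingleton (Abelian.Ext M Y i)

section LeftPerp

variable {X : C → Prop} {M : C}

theorem leftPerp_extClosed : ExtClosed (leftPerp X) :=
  fun _ _ _ _ _ h hA hD Y hY i hi => h.ext_middle (hA Y hY i hi) (hD Y hY i hi)

theorem leftPerp_kerEpiClosed : KerEpiClosed (leftPerp X) :=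
  fun _ _ _ _ _ h hB hD Y hY i hi => h.ext_left (hB Y hY i hi) (hD Y hY (i + 1) (by lia))

theorem leftPerp_of_projective (X : C → Prop) (P : C) [Projective P] : leftPerp X P :=
  fun _ _ i hi => HasProjectiveDimensionLT.subsingleton P 1 i hi _

theorem leftPerp.retract {A : C} (i : A ⟶ M) (p : M ⟶ A) (h : i ≫ p = 𝟙 A) (hM : leftPerp X M) :
    leftPerp X A := by
  intro Y hY n hn
  refine subsingleton_of_forall_eq 0 fun x => ?_
  rw [← x.mk₀_id_comp, ← h, ← Ext.mk₀_comp_mk₀, Ext.comp_assoc_of_second_deg_zero,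
    (hM Y hY n hn).elim ((Ext.mk₀ p).comp x (zero_add _)) 0, Ext.comp_zero]

theorem leftPerp.hatAll (hM : leftPerp X M) : leftPerp (HatAll X) M := by
  rintro V ⟨n, hV⟩
  induction n generalizing V with
  | zero => exact hM V hV
  | succ n ih =>
    obtain ⟨K, E, f, g, hs, hE, hK⟩ := hV
    exact fun i hi => hs.ext_coeff_right (hM E hE i hi) (ih K hK (i + 1) (by lia))

theorem leftPerp.projective_of_hatAll (hM : leftPerp Projective M) (h : HatAll Projective M) :
    Projective M := by
  obtain ⟨_ | n, h⟩ := h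
  · exact h
  · obtain ⟨K, P, f, g, hs, hP, hK⟩ := h
    exact hs.projective_of_ext_one hP (hM.hatAll K ⟨n, hK⟩ 1 le_rfl)

end LeftPerp

section Syzygy

variable {d k : ℕ} {K : C}

theorem Syzygy.ext (hP : ∀ P : C, Projective P → HasInjectiveDimensionLT P (d + 1))
    (hK : Syzygy k K) {P : C} (hPP : Projective P) {i : ℕ} (hi : 1 ≤ i) (hd : d + 1 ≤ i + k) :
    Subsingleton (Abelian.Ext K P i) := by
  induction k generalizing K i with
  | zero =>
    have := hP P hPP
    exact HasInjectiveDimensionLT.subsingleton P (d + 1) i hd K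
  | succ k ih =>
    obtain ⟨Q, N, f, g, hs, hQ, hN⟩ := hK
    exact hs.ext_left (leftPerp_of_projective Projective Q P hPP i hi)
      (ih hN (by lia) (by lia))

theorem Syzygy.leftPerp_projective
    (hP : ∀ P : C, Projective P → HasInjectiveDimensionLT P (d + 1)) (hK : Syzygy d K) :
    leftPerp Projective K :=
  fun _ hPP _ hi => hK.ext hP hPP hi (by lia)

/-- By descending induction on the order `k` of the syzygy: embed `K` into an object of finite
projective dimension with cokernel a `k`-th syzygy `K'`. If `k = d`, then `K'` lies in the
orthogonal; otherwise the approximation of a syzygy of `K'` yields one of `K'`, and that one of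
`K`. -/
theorem Syzygy.coConeCls [EnoughProjectives C] [EnoughInjectives C]
    (hI : ∀ E : C, Injective E → HasProjectiveDimensionLT E (d + 1))
    (hP : ∀ P : C, Projective P → HasInjectiveDimensionLT P (d + 1))
    {j : ℕ} (hkj : j + k = d) (hK : Syzygy k K) :
    CoConeCls (HatAll Projective) (leftPerp Projective) K := by
  obtain ⟨B, K', f, g, hs, hK', hB⟩ := hK.exists_embedding hI hkj
  have hB : HatAll Projective B := hatAll_projective_iff.2 ⟨_, hB⟩
  induction j generalizing k K B K' with
  | zero =>
    obtain rfl : k = d := by lia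
    exact ⟨B, K', f, g, hs, hB, hK'.leftPerp_projective hP⟩
  | succ j ih =>
    obtain ⟨L, P, a, b, hab, hPP⟩ := exists_isSES_projective K'
    have hL : Syzygy (k + 1) L := ⟨P, K', a, b, hab, hPP, hK'⟩
    obtain ⟨B', L', f', g', hs', hL', hB'⟩ := hL.exists_embedding hI (j := j) (by lia)
    have hL : CoConeCls (HatAll Projective) (leftPerp Projective) L :=
      ih (by lia) hL B' L' f' g' hs' hL' ‹_› (hatAll_projective_iff.2 ⟨_, hB'⟩)
    exact (hL.coneCls leftPerp_extClosed hab (leftPerp_of_projective _ P)).coConeCls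
      hatAll_projective_extClosed hs hB

end Syzygy

/-! ### Gorenstein objects -/

section Gorenstein

variable {X 𝒢 W : C → Prop} {M : C}

theorem leftPerp_kernel_of_exact {P : ℤ → C} {d : ∀ n : ℤ, P n ⟶ P (n + 1)}
    (hd : ∀ n, d n ≫ d (n + 1) = 0) (hP : ∀ n, leftPerp W (P n))
    (hex : ∀ n, (ShortComplex.mk (d n) (d (n + 1)) (hd n)).Exact)
    (hW : ∀ Q : C, W Q → ∀ (n : ℤ) (ψ : P (n + 1) ⟶ Q), d n ≫ ψ = 0 →
      ∃ φ : P (n + 1 + 1) ⟶ Q, d (n + 1) ≫ φ = ψ) (n : ℤ) :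
    leftPerp W (kernel (d n)) := by
  have hs (n : ℤ) := isSES_kernel_lift_of_exact (hex n)
  intro Q hQ i hi
  induction i, hi using Nat.le_induction generalizing n with
  | base =>
    obtain ⟨m, rfl⟩ : ∃ m, n = m + 1 + 1 + 1 := ⟨n - 3, by lia⟩
    refine (hs (m + 1 + 1)).ext_one_of_forall_extension (hP _ Q hQ 1 le_rfl) fun φ => ?_
    have hdπ : d m ≫ kernel.lift (d (m + 1 + 1)) (d (m + 1)) (hd _) = 0 := by
      rw [← cancel_mono (kernel.ι _), Category.assoc, kernel.lift_ι, hd, zero_comp]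
    obtain ⟨ψ, hψ⟩ := hW Q hQ m (kernel.lift _ _ (hd (m + 1)) ≫ φ)
      (by rw [reassoc_of% hdπ, zero_comp])
    have := (hs (m + 1)).epi
    exact ⟨ψ, by rw [← cancel_epi (kernel.lift _ _ (hd (m + 1))), kernel.lift_ι_assoc, hψ]⟩
  | succ i _ ih =>
    obtain ⟨m, rfl⟩ : ∃ m, n = m + 1 := ⟨n - 1, by lia⟩
    exact (hs m).ext_right (ih m) (hP m Q hQ (i + 1) (by lia))

theorem leftPerp_of_gClass (hX : ∀ P, X P → leftPerp W P) (hM : GClass X W M) : leftPerp W M := by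
  obtain ⟨P, d, hd, hP, hex, ⟨e⟩, hW⟩ := hM
  exact (leftPerp_kernel_of_exact hd (fun n => hX _ (hP n)) hex hW 0).retract e.hom e.inv
    e.hom_inv_id

theorem exists_int_chain {α : Type*} {r : α → α → Prop} (hr : ∀ a, ∃ b, r a b)
    (hr' : ∀ b, ∃ a, r a b) (x : α) : ∃ z : ℤ → α, z 0 = x ∧ ∀ n, r (z n) (z (n + 1)) := by
  choose s hs using hr
  choose t ht using hr'
  refine ⟨fun | .ofNat n => s^[n] x | .negSucc n => t^[n + 1] x, rfl, ?_⟩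
  rintro (n | _ | n)
  · change r (s^[n] x) (s^[n + 1] x)
    rw [Function.iterate_succ_apply']
    exact hs _
  · exact ht x
  · change r (t^[n + 1 + 1] x) (t^[n + 1] x)
    rw [Function.iterate_succ_apply' t (n + 1)]
    exact ht _

theorem gClass_of_isGenerator_of_isCogenerator (hgen : IsGenerator X 𝒢)
    (hcogen : IsCogenerator X 𝒢) (h𝒢 : ∀ G, 𝒢 G → leftPerp W G) (hM : 𝒢 M) : GClass X W M := by
  obtain ⟨z, hz, hr⟩ := exists_int_chain (α := Subtype 𝒢)
    (r := fun G G' => ∃ (P : C) (f : G.1 ⟶ P) (g : P ⟶ G'.1), IsSES f g ∧ X P)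
    (fun G => have ⟨P, G', f, g, hs, hP, hG'⟩ := hcogen.2 G.1 G.2
      ⟨⟨G', hG'⟩, P, f, g, hs, hP⟩)
    (fun G => have ⟨G', P, f, g, hs, hP, hG'⟩ := hgen.2 G.1 G.2
      ⟨⟨G', hG'⟩, P, f, g, hs, hP⟩) ⟨M, hM⟩
  choose P f g hs hP using hr
  have hf (n : ℤ) : Mono (f n) := (hs n).mono
  have hg (n : ℤ) : Epi (g n) := (hs n).epi
  have hd (n : ℤ) : (g n ≫ f (n + 1)) ≫ g (n + 1) ≫ f (n + 1 + 1) = 0 := by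
    rw [Category.assoc, reassoc_of% (hs (n + 1)).1, zero_comp, comp_zero]
  refine ⟨P, fun n => g n ≫ f (n + 1), hd, hP,
    fun n => (hs (n + 1)).exact_comp _ _ _, ?_, fun Q hQ n ψ hψ => ?_⟩
  · have e : (z 0).1 ≅ kernel (g 0 ≫ f (0 + 1)) :=
      IsLimit.conePointUniqueUpToIso (hs 0).2.fIsKernel (limit.isLimit _) ≪≫
        (kernelCompMono _ _).symm
    exact ⟨eqToIso (by rw [hz]) ≪≫ e⟩
  · obtain ⟨χ, rfl⟩ := (hs (n + 1)).exists_desc ψ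
      (by rwa [← cancel_epi (g n), comp_zero, ← Category.assoc])
    obtain ⟨φ, rfl⟩ := (hs (n + 1 + 1)).exists_extension_of_ext_one
      (h𝒢 _ (z _).2 Q hQ 1 le_rfl) χ
    exact ⟨φ, Category.assoc _ _ _⟩

theorem isGenerator_leftPerp_projective [EnoughProjectives C] :
    IsGenerator (C := C) Projective (leftPerp Projective) := by
  refine ⟨fun P _ => leftPerp_of_projective _ P, fun M hM => ?_⟩
  obtain ⟨K, P, f, g, hs, hP⟩ := exists_isSES_projective M
  exact ⟨K, P, f, g, hs, hP, leftPerp_kerEpiClosed f g hs (leftPerp_of_projective _ P) hM⟩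

theorem isCogenerator_leftPerp_projective
    (h : ∀ M : C, CoConeCls (HatAll Projective) (leftPerp Projective) M) :
    IsCogenerator (C := C) Projective (leftPerp Projective) := by
  refine ⟨fun P _ => leftPerp_of_projective _ P, fun M hM => ?_⟩
  obtain ⟨V, G, f, g, hs, hV, hG⟩ := h M
  exact ⟨V, G, f, g, hs, (leftPerp_extClosed f g hs hM hG).projective_of_hatAll hV, hG⟩

theorem gClass_projective_iff_leftPerp [EnoughProjectives C]
    (h : ∀ M : C, CoConeCls (HatAll Projective) (leftPerp Projective) M) :
    GClass Projective Projective M ↔ leftPerp Projective M :=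
  ⟨leftPerp_of_gClass fun P _ => leftPerp_of_projective _ P,
    gClass_of_isGenerator_of_isCogenerator isGenerator_leftPerp_projective
      (isCogenerator_leftPerp_projective h) fun _ => id⟩

end Gorenstein

/-! ### Cotorsion pairs -/

section Cotorsion

variable [EnoughProjectives C]

theorem cotorsionPairOn_projective :
    CotorsionPairOn (C := C) (fun _ => True) Projective (fun _ => True) where
  subU _ _ := trivial
  subV _ _ := trivial
  isoU := Projective.of_iso
  summandU i p h _ := (Retract.mk i p h).projective
  isoV _ _ := trivial
  summandV _ _ _ _ := trivial
  ext1 M N _ _ := leftPerp_of_projective (fun _ => True) M N trivial 1 le_rfl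
  res M _ :=
    have ⟨K, P, f, g, hs, hP⟩ := exists_isSES_projective M
    ⟨K, P, f, g, hs, hP, trivial⟩
  cores M _ := ⟨M, 0, _, _, isSES_id_zero M, Projective.zero_projective, trivial⟩

theorem cotorsionPairOn_gorensteinProjective [EnoughInjectives C] {d : ℕ}
    (hI : ∀ E : C, Injective E → HasProjectiveDimensionLT E (d + 1))
    (hP : ∀ P : C, Projective P → HasInjectiveDimensionLT P (d + 1)) :
    CotorsionPairOn (C := C) (fun _ => True) (GClass Projective Projective)
      (HatAll Projective) := by
  have happrox (M : C) : CoConeCls (HatAll Projective) (leftPerp Projective) M :=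
    Syzygy.coConeCls hI hP (k := 0) (add_zero d) trivial
  rw [show GClass (C := C) Projective Projective = leftPerp Projective from
    funext fun M => propext (gClass_projective_iff_leftPerp happrox)]
  exact {
    subU _ _ := trivial
    subV _ _ := trivial
    isoU e h := h.retract e.inv e.hom e.inv_hom_id
    summandU i p h hM := hM.retract i p h
    isoV e h := h.retract e.inv e.hom e.inv_hom_id
    summandV i p h hM := hM.retract i p h
    ext1 M N hM hN := hM.hatAll N hN 1 le_rfl
    res M _ := by
      obtain ⟨K, P, f, g, hs, hP⟩ := exists_isSES_projective M
      obtain ⟨V, G, f', g', hs', hV, hG⟩ := (happrox K).coneCls leftPerp_extClosed hs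
        (leftPerp_of_projective _ P)
      exact ⟨V, G, f', g', hs', hG, hV⟩
    cores M _ := by
      obtain ⟨V, G, f, g, hs, hV, hG⟩ := happrox M
      exact ⟨V, G, f, g, hs, hG, hV⟩ }

end Cotorsion

end Abelian

/-! ### Cosyzygies of finitely generated modules -/

section Cosyzygies

variable (R : Type u) [Ring R]

/-- The free left module of rank `n`. -/
abbrev finFree (n : ℕ) : ModuleCat.{u} R := ModuleCat.of R (Fin n → R)

variable {R} {M M' : ModuleCat.{u} R} {a : ℕ}

/-- `M' → Rᵃ → M → 0` is exact and every functional on `M'` extends to `Rᵃ`. In other words, `i` is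
a left approximation of `M'` by finite free modules and `p` is its cokernel; `i` need not be
injective. -/
structure IsCosyzygySequence (i : M' ⟶ finFree R a) (p : finFree R a ⟶ M) : Prop where
  epi : Epi p
  exact : ∃ w : i ≫ p = 0, (ShortComplex.mk i p w).Exact
  exists_extension_functional (φ : M' ⟶ ModuleCat.of R R) : ∃ ψ, i ≫ ψ = φ

/-- The `k`-th cosyzygies of finitely generated modules, relative to left approximations by finite
free modules. Under `Hom(-, R)` they correspond to `k`-th syzygies of right modules. -/
def IsCosyzygy : ℕ → ModuleCat.{u} R → Prop
  | 0, M => Module.Finite R M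
  | k + 1, M => ∃ (M' : ModuleCat.{u} R) (a : ℕ) (i : M' ⟶ finFree R a) (p : finFree R a ⟶ M),
      IsCosyzygySequence i p ∧ IsCosyzygy k M'

theorem IsCosyzygy.finite {k : ℕ} (hM : IsCosyzygy k M) : Module.Finite R M := by
  cases k with
  | zero => exact hM
  | succ k =>
    obtain ⟨M', a, i, p, h, -⟩ := hM
    exact Module.Finite.of_surjective p.hom ((ModuleCat.epi_iff_surjective p).1 h.epi)

theorem IsCosyzygySequence.exists_extension {i : M' ⟶ finFree R a} {p : finFree R a ⟶ M}
    (h : IsCosyzygySequence i p) {c : ℕ} (φ : M' ⟶ finFree R c) : ∃ ψ, i ≫ ψ = φ := by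
  choose ψ hψ using fun j : Fin c =>
    h.exists_extension_functional (φ ≫ ModuleCat.ofHom (LinearMap.proj j))
  refine ⟨ModuleCat.ofHom (LinearMap.pi fun j => (ψ j).hom), ?_⟩
  ext x j
  exact ConcreteCategory.congr_hom (hψ j) x

end Cosyzygies

/-! ### Duals of cosyzygies -/

section Dual

variable {R : Type u} [Ring R] {M M' N : ModuleCat.{u} R} {a : ℕ}

/-- The right module `Hom(M, R)`. -/
def dual (M : ModuleCat.{u} R) : ModuleCat.{u} Rᵐᵒᵖ := ModuleCat.of Rᵐᵒᵖ (M →ₗ[R] R)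

/-- Precomposition with `f`, as a map of right modules. -/
def dualMap (f : M ⟶ N) : dual N ⟶ dual M :=
  ModuleCat.ofHom
    { toFun := fun φ : N →ₗ[R] R => φ ∘ₗ f.hom
      map_add' := fun _ _ => rfl
      map_smul' := fun _ _ => rfl }

/-- Evaluation at an element of `M`, as a map of right modules `Hom(M, R) → R`. -/
def dualEval : M →+ (dual M ⟶ ModuleCat.of Rᵐᵒᵖ Rᵐᵒᵖ) where
  toFun x := ModuleCat.ofHom
    { toFun := fun φ : M →ₗ[R] R => MulOpposite.op (φ x)
      map_add' := fun _ _ => rfl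
      map_smul' := fun _ _ => rfl }
  map_zero' := ModuleCat.hom_ext (LinearMap.ext fun φ : M →ₗ[R] R =>
    congrArg MulOpposite.op (map_zero φ))
  map_add' x y := ModuleCat.hom_ext (LinearMap.ext fun φ : M →ₗ[R] R =>
    congrArg MulOpposite.op (map_add φ x y))

theorem dualMap_comp_dualEval (f : M ⟶ N) (x : M) :
    dualMap f ≫ dualEval x = dualEval (f.hom x) := rfl

theorem dualEval_finFree_injective : Function.Injective (dualEval (M := finFree R a)) :=
  fun _ _ h => funext fun j => MulOpposite.op_injective
    (ConcreteCategory.congr_hom h (LinearMap.proj j : (Fin a → R) →ₗ[R] R))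

theorem dualEval_finFree_surjective : Function.Surjective (dualEval (M := finFree R a)) := by
  intro χ
  let π (j : Fin a) : (Fin a → R) →ₗ[R] R := LinearMap.proj j
  let χ' : ((Fin a → R) →ₗ[R] R) →ₗ[Rᵐᵒᵖ] Rᵐᵒᵖ := χ.hom
  refine ⟨fun j => (χ' (π j)).unop, ModuleCat.hom_ext (LinearMap.ext fun φ => ?_)⟩
  let φ' : (Fin a → R) →ₗ[R] R := φ
  have hφ (v : Fin a → R) : φ' v = ∑ j, v j * φ' (Pi.single j 1) := by
    conv_lhs => rw [pi_eq_sum_univ' v]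
    simp
  have hχ : χ' φ' = ∑ j, MulOpposite.op (φ' (Pi.single j 1)) * χ' (π j) := by
    have : φ' = ∑ j, MulOpposite.op (φ' (Pi.single j 1)) • π j :=
      LinearMap.ext fun v => by simp [π, hφ v]
    conv_lhs => rw [this]
    simp
  refine (congrArg MulOpposite.op (hφ _)).trans (.trans ?_ hχ.symm)
  simp

instance : Projective (dual (finFree R a)) :=
  let e : (Fin a → Rᵐᵒᵖ) ≃ₗ[Rᵐᵒᵖ] ((Fin a → R) →ₗ[R] R) :=
    (LinearEquiv.piCongrRight fun _ => (MulOpposite.opLinearEquiv Rᵐᵒᵖ).symm) ≪≫ₗ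
      (Pi.basisFun R (Fin a)).constr Rᵐᵒᵖ
  have := Module.Projective.of_equiv e
  inferInstanceAs (Projective (ModuleCat.of Rᵐᵒᵖ ((Fin a → R) →ₗ[R] R)))

theorem IsCosyzygySequence.isSES_dualMap {i : M' ⟶ finFree R a} {p : finFree R a ⟶ M}
    (h : IsCosyzygySequence i p) : IsSES (dualMap p) (dualMap i) := by
  obtain ⟨w, hip⟩ := h.exact
  have : Epi (ShortComplex.mk i p w).g := h.epi
  have hp := (ModuleCat.epi_iff_surjective p).1 h.epi
  have hw : dualMap p ≫ dualMap i = 0 :=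
    ModuleCat.hom_ext (LinearMap.ext fun φ : M →ₗ[R] R => LinearMap.ext fun x =>
      (congrArg φ (ConcreteCategory.congr_hom w x)).trans (map_zero φ))
  refine ⟨hw, ModuleCat.shortComplex_shortExact _ (fun φ => ⟨fun hφ => ?_, ?_⟩) ?_ fun φ => ?_⟩
  · have hφ : i ≫ ModuleCat.ofHom φ = 0 := ModuleCat.hom_ext hφ
    exact ⟨(hip.desc _ hφ).hom, congrArg ModuleCat.Hom.hom (hip.g_desc _ hφ)⟩
  · rintro ⟨ψ, rfl⟩
    exact ConcreteCategory.congr_hom hw ψ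
  · exact fun φ ψ hφψ => LinearMap.cancel_right hp |>.1 hφψ
  · obtain ⟨ψ, hψ⟩ := h.exists_extension_functional (ModuleCat.ofHom φ)
    exact ⟨ψ.hom, congrArg ModuleCat.Hom.hom hψ⟩

theorem IsCosyzygySequence.exists_extension_dual {m : ℕ} {J : ModuleCat.{u} Rᵐᵒᵖ}
    (hJ : CoHat Injective m J) {i : M' ⟶ finFree R a} {p : finFree R a ⟶ M}
    (h : IsCosyzygySequence i p) (hM' : IsCosyzygy m M') (χ : dual M ⟶ J) :
    ∃ ψ, dualMap p ≫ ψ = χ := by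
  induction m generalizing J M M' a with
  | zero =>
    have := h.isSES_dualMap.mono
    have : Injective J := hJ
    exact ⟨Injective.factorThru χ (dualMap p), Injective.comp_factorThru _ _⟩
  | succ m ih =>
    obtain ⟨E, K, f, g, hs, hE, hK⟩ := hJ
    obtain ⟨M'', b, i', p', h', hM''⟩ := hM'
    have := hs.epi
    have := h.isSES_dualMap.mono
    have := h.isSES_dualMap.epi
    refine hs.exists_extension_of_exact h.isSES_dualMap.2.exact
      (fun φ => ⟨Injective.factorThru φ (dualMap p), Injective.comp_factorThru _ _⟩)
      (fun χ => ?_) χ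
    obtain ⟨ψ, rfl⟩ := ih hK h' hM'' χ
    exact ⟨dualMap p' ≫ Projective.factorThru ψ g, by simp⟩

theorem IsCosyzygy.dualEval_surjective {m : ℕ}
    (hR : CoHat Injective m (ModuleCat.of Rᵐᵒᵖ Rᵐᵒᵖ)) (hM : IsCosyzygy (m + 1) M) :
    Function.Surjective (dualEval (M := M)) := by
  intro χ
  obtain ⟨M', a, i, p, h, hM'⟩ := hM
  obtain ⟨ψ, rfl⟩ := h.exists_extension_dual hR hM' χ
  obtain ⟨u, rfl⟩ := dualEval_finFree_surjective ψ
  exact ⟨p.hom u, (dualMap_comp_dualEval p u).symm⟩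

theorem IsCosyzygy.dualEval_injective {m : ℕ}
    (hR : CoHat Injective m (ModuleCat.of Rᵐᵒᵖ Rᵐᵒᵖ)) (hM : IsCosyzygy (m + 2) M) :
    Function.Injective (dualEval (M := M)) := by
  obtain ⟨M', a, i, p, h, hM'⟩ := hM
  refine (injective_iff_map_eq_zero _).2 fun x hx => ?_
  obtain ⟨u, rfl⟩ := (ModuleCat.epi_iff_surjective p).1 h.epi x
  obtain ⟨χ, hχ⟩ := h.isSES_dualMap.exists_desc (dualEval u) hx
  obtain ⟨z, rfl⟩ := hM'.dualEval_surjective hR χ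
  obtain rfl : i.hom z = u := dualEval_finFree_injective hχ
  obtain ⟨w, -⟩ := h.exact
  exact ConcreteCategory.congr_hom w z

end Dual

/-! ### Modules that are flat on cosyzygies -/

section FlatOnCosyzygies

variable {R : Type u} [Ring R] {k : ℕ} {M N : ModuleCat.{u} R}

theorem exists_isCosyzygySequence [IsNoetherianRing Rᵐᵒᵖ] (M : ModuleCat.{u} R)
    [Module.Finite R M] : ∃ (c : ℕ) (γ : M ⟶ finFree R c), IsCosyzygySequence γ (cokernel.π γ) := by
  obtain ⟨s, π, hπ⟩ := Module.Finite.exists_fin' R M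
  let ev : (M →ₗ[R] R) →ₗ[Rᵐᵒᵖ] (Fin s → Rᵐᵒᵖ) :=
    LinearMap.pi fun j => (dualEval (π (Pi.single j 1))).hom
  have hev : Function.Injective ev := fun φ ψ h => by
    rw [← LinearMap.cancel_right hπ]
    exact LinearMap.pi_ext' fun j => LinearMap.ext_ring (MulOpposite.op_injective (congrFun h j))
  have : IsNoetherian Rᵐᵒᵖ (M →ₗ[R] R) := isNoetherian_of_injective ev hev
  obtain ⟨c, g, hg⟩ := Module.Finite.exists_fin (R := Rᵐᵒᵖ) (M := M →ₗ[R] R)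
  refine ⟨c, ModuleCat.ofHom (LinearMap.pi g), inferInstance,
    ⟨_, ShortComplex.exact_cokernel _⟩, fun φ => ?_⟩
  obtain ⟨r, hr⟩ := Submodule.mem_span_range_iff_exists_fun Rᵐᵒᵖ |>.1
    (hg.symm ▸ Submodule.mem_top : φ.hom ∈ Submodule.span Rᵐᵒᵖ (Set.range g))
  refine ⟨ModuleCat.ofHom (Fintype.linearCombination R fun j => (r j).unop), ?_⟩
  ext x
  simp [← hr, Fintype.linearCombination_apply]

/-- Every map from a `k`-th cosyzygy to `N` factors through a finite free module. For `k = 0` this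
is Lazard's criterion for flatness; in general it expresses the vanishing of `Tor` with `N` in
degree `k + 1`, so that a `k`-th syzygy of `N` is flat. -/
def FlatOnCosyzygies (k : ℕ) (N : ModuleCat.{u} R) : Prop :=
  ∀ M : ModuleCat.{u} R, IsCosyzygy k M → ∀ f : M ⟶ N,
    ∃ (c : ℕ) (p : M ⟶ finFree R c) (q : finFree R c ⟶ N), p ≫ q = f

theorem FlatOnCosyzygies.of_zero (hN : FlatOnCosyzygies 0 N) (k : ℕ) : FlatOnCosyzygies k N :=
  fun M hM => hN M hM.finite

theorem exists_factorization_of_linearMap_finsupp {M ι : Type*} [AddCommGroup M] [Module R M]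
    [Module.Finite R M] (f : M →ₗ[R] ι →₀ R) :
    ∃ (c : ℕ) (p : M →ₗ[R] (Fin c → R)) (q : (Fin c → R) →ₗ[R] ι →₀ R), q ∘ₗ p = f := by
  classical
  obtain ⟨n, x, hx⟩ := Module.Finite.exists_fin (R := R) (M := M)
  let S : Finset ι := Finset.univ.biUnion fun j => (f (x j)).support
  let e : Fin S.card ≃ S := S.equivFin.symm
  refine ⟨S.card, LinearMap.pi fun i => Finsupp.lapply (e i : ι) ∘ₗ f,
    Fintype.linearCombination R fun i => Finsupp.single (e i : ι) 1,
    LinearMap.ext_on_range hx fun j => ?_⟩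
  have hS : (f (x j)).support ⊆ S :=
    Finset.subset_biUnion_of_mem (fun j => (f (x j)).support) (Finset.mem_univ j)
  calc ∑ i, f (x j) (e i) • Finsupp.single (e i : ι) (1 : R)
      = ∑ s : S, Finsupp.single (s : ι) (f (x j) s) := by
        simpa using e.sum_comp fun s => Finsupp.single (s : ι) (f (x j) s)
    _ = ∑ s ∈ S, Finsupp.single s (f (x j) s) := Finset.sum_coe_sort S fun s => Finsupp.single s _
    _ = f (x j) := by
      rw [← Finsupp.sum_of_support_subset _ hS _ (by simp), Finsupp.sum_single]

theorem flatOnCosyzygies_of_projective (P : ModuleCat.{u} R) [Projective P] (k : ℕ) :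
    FlatOnCosyzygies k P := by
  refine FlatOnCosyzygies.of_zero (fun M hM f => ?_) k
  obtain ⟨s, hs⟩ := Module.projective_def'.1 (inferInstance : Module.Projective R P)
  have : Module.Finite R M := hM
  obtain ⟨c, p, q, hqp⟩ := exists_factorization_of_linearMap_finsupp (s ∘ₗ f.hom)
  refine ⟨c, ModuleCat.ofHom p, ModuleCat.ofHom (Finsupp.linearCombination R id ∘ₗ q),
    ModuleCat.hom_ext ?_⟩
  change (Finsupp.linearCombination R id ∘ₗ q) ∘ₗ p = f.hom
  rw [LinearMap.comp_assoc, hqp, ← LinearMap.comp_assoc, hs, LinearMap.id_comp]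

theorem IsSES.flatOnCosyzygies [IsNoetherianRing Rᵐᵒᵖ] {N' P : ModuleCat.{u} R} {f : N' ⟶ P}
    {g : P ⟶ N} (hs : IsSES f g) (hP : Projective P) (hN : FlatOnCosyzygies (k + 1) N) :
    FlatOnCosyzygies k N' := by
  intro M hM φ
  have := hM.finite
  have := hs.epi
  obtain ⟨c, γ, hγ⟩ := exists_isCosyzygySequence M
  obtain ⟨w, hexact⟩ := hγ.exact
  obtain ⟨θ, hθ⟩ := hs.exists_extension_of_exact hexact
    (fun φ => by
      obtain ⟨e, p, q, rfl⟩ := flatOnCosyzygies_of_projective P k M hM φ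
      obtain ⟨ψ, rfl⟩ := hγ.exists_extension p
      exact ⟨ψ ≫ q, (Category.assoc _ _ _).symm⟩)
    (fun χ => by
      obtain ⟨e, p, q, rfl⟩ := hN _ ⟨M, c, γ, _, hγ, hM⟩ χ
      exact ⟨p ≫ Projective.factorThru q g, by simp⟩) φ
  exact ⟨c, γ, θ, hθ⟩

theorem flatOnCosyzygies_of_injective [IsNoetherianRing Rᵐᵒᵖ] {m : ℕ}
    (hR : CoHat Injective m (ModuleCat.of Rᵐᵒᵖ Rᵐᵒᵖ)) (E : ModuleCat.{u} R) [Injective E] :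
    FlatOnCosyzygies (m + 2) E := by
  intro M hM f
  have := hM.finite
  obtain ⟨c, γ, hγ⟩ := exists_isCosyzygySequence M
  have : Mono γ := by
    rw [ModuleCat.mono_iff_injective]
    refine fun x y hxy => hM.dualEval_injective hR (ModuleCat.hom_ext (LinearMap.ext
      fun φ : M →ₗ[R] R => congrArg MulOpposite.op ?_))
    obtain ⟨ψ, hψ⟩ := hγ.exists_extension_functional (ModuleCat.ofHom φ)
    have hφ (z : M) : φ z = ψ.hom (γ.hom z) := (ConcreteCategory.congr_hom hψ z).symm
    rw [hφ, hφ, hxy]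
  exact ⟨c, γ, Injective.factorThru f γ, Injective.comp_factorThru _ _⟩

end FlatOnCosyzygies

/-! ### Dimension bounds over an Iwanaga-Gorenstein ring -/

section InjectiveDimension

variable {C : Type u} [Category.{v} C] [Abelian C]

theorem hasInjectiveDimensionLT_biproduct {J : Type*} [Finite J] {X : J → C}
    [HasBiproduct X] {n : ℕ} (hX : ∀ j, HasInjectiveDimensionLT (X j) n) :
    HasInjectiveDimensionLT (⨁ X) n := by
  have := Fintype.ofFinite J
  let := HasExt.standard C
  refine HasInjectiveDimensionLT.mk fun i hi Y e => ?_
  refine (Ext.addEquivBiproduct Y (biproduct.isBilimit X) i).injective (funext fun j => ?_)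
  exact (Ext.eq_zero_of_hasInjectiveDimensionLT _ n hi).trans
    (Ext.eq_zero_of_hasInjectiveDimensionLT _ n hi).symm

/-- In a class closed under syzygies all of whose objects have injective dimension at most `n`, all
objects have projective dimension at most `n`: `Ext` of degree `n + 1` from an object to its own
`(n + 1)`-st syzygy vanishes, so the `n`-th syzygy is a summand of a projective. -/
theorem hasProjectiveDimensionLT_of_syzygies [EnoughProjectives C] {n : ℕ} {X : C → Prop}
    (hX : ∀ N, X N → HasInjectiveDimensionLT N (n + 1))
    (hsyz : ∀ {K P N : C} {f : K ⟶ P} {g : P ⟶ N}, IsSES f g → Projective P → X N → X K)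
    {N : C} (hN : X N) : HasProjectiveDimensionLT N (n + 1) := by
  let := HasExt.standard C
  suffices H : ∀ j N, X N → (∀ Y, X Y → Subsingleton (Abelian.Ext N Y (j + 1))) →
      HasProjectiveDimensionLT N (j + 1) from
    H n N hN fun Y hY =>
      have := hX Y hY
      HasInjectiveDimensionLT.subsingleton Y (n + 1) (n + 1) le_rfl N
  intro j N hN h
  obtain ⟨K, P, f, g, hs, hP⟩ := exists_isSES_projective N
  have hK := hsyz hs hP hN
  induction j generalizing N K P with
  | zero =>
    exact projective_iff_hasProjectiveDimensionLT_one.1 (hs.projective_of_ext_one hP (h K hK))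
  | succ j ih =>
    obtain ⟨K', P', f', g', hs', hP'⟩ := exists_isSES_projective K
    exact (hs.2.hasProjectiveDimensionLT_X₃_iff j hP).2
      (ih K hK (fun Y hY => hs.ext_left (HasProjectiveDimensionLT.subsingleton P 1 (j + 1)
        (by lia) Y) (h Y hY)) K' P' f' g' hs' hP' (hsyz hs' hP' hK))

end InjectiveDimension

section Dimensions

variable {R : Type u} [Ring R]

theorem hasInjectiveDimensionLT_finFree {n : ℕ} (hR : HasInjectiveDimensionLT (ModuleCat.of R R) n)
    (k : ℕ) : HasInjectiveDimensionLT (finFree R k) n :=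
  have := hasInjectiveDimensionLT_biproduct fun _ : Fin k => hR
  hasInjectiveDimensionLT_of_iso
    (ModuleCat.biproductIsoPi fun _ : Fin k => ModuleCat.of R R) n

theorem exists_finite_syzygy [IsNoetherianRing R] (M : ModuleCat.{u} R) [Module.Finite R M] :
    ∃ (K P : ModuleCat.{u} R) (f : K ⟶ P) (g : P ⟶ M),
      IsSES f g ∧ Projective P ∧ Module.Finite R K := by
  obtain ⟨s, π, hπ⟩ := Module.Finite.exists_fin' R M
  have : Epi (ModuleCat.ofHom π) := (ModuleCat.epi_iff_surjective _).2 hπ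
  refine ⟨_, finFree R s, _, ModuleCat.ofHom π, isSES_kernel_ι _, inferInstance, ?_⟩
  exact Module.Finite.of_injective (kernel.ι (ModuleCat.ofHom π)).hom
    ((ModuleCat.mono_iff_injective _).1 inferInstance)

section Ext

variable [HasExt.{w} (ModuleCat.{u} R)] {F : ModuleCat.{u} R}

theorem FlatOnCosyzygies.exists_ext_factorization [IsNoetherianRing R] (hF : FlatOnCosyzygies 0 F)
    {j : ℕ} (M : ModuleCat.{u} R) [Module.Finite R M] (e : Abelian.Ext M F j) :
    ∃ (k : ℕ) (e' : Abelian.Ext M (finFree R k) j) (q : finFree R k ⟶ F),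
      e'.comp (Ext.mk₀ q) (add_zero j) = e := by
  induction j generalizing M with
  | zero =>
    obtain ⟨f, rfl⟩ := Ext.homEquiv₀.symm.surjective e
    obtain ⟨k, p, q, rfl⟩ := hF M ‹_› f
    exact ⟨k, Ext.mk₀ p, q, Ext.mk₀_comp_mk₀ p q⟩
  | succ j ih =>
    obtain ⟨K, P, f, g, hs, hP, hK⟩ := exists_finite_syzygy M
    obtain ⟨e₁, rfl⟩ := Ext.contravariant_sequence_exact₃ hs.2 _ e
      ((HasProjectiveDimensionLT.subsingleton P 1 (j + 1) (by lia) F).elim _ _) (add_comm 1 j)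
    obtain ⟨k, e', q, rfl⟩ := ih K e₁
    exact ⟨k, hs.2.extClass.comp e' (add_comm 1 j), q, Ext.comp_assoc_of_third_deg_zero _ _ _ _⟩

theorem injective_of_ext_one_finite
    (h : ∀ M : ModuleCat.{u} R, Module.Finite R M → Subsingleton (Abelian.Ext M F 1)) :
    Injective F := by
  have hF : Module.Baer R F := by
    intro I φ
    let i : ModuleCat.of R I ⟶ ModuleCat.of R R := ModuleCat.ofHom I.subtype
    have : Mono i := (ModuleCat.mono_iff_injective i).2 Subtype.val_injective
    have hcoker := Module.Finite.of_surjective (cokernel.π i).hom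
      ((ModuleCat.epi_iff_surjective _).1 inferInstance)
    obtain ⟨ψ, hψ⟩ := (isSES_cokernel_π i).exists_extension_of_ext_one (h _ hcoker)
      (ModuleCat.ofHom φ)
    exact ⟨ψ.hom, fun x hx => ConcreteCategory.congr_hom hψ ⟨x, hx⟩⟩
  have := hF.injective
  exact Module.injective_object_of_injective_module R F

theorem hasInjectiveDimensionLT_of_ext_finite {n : ℕ}
    (h : ∀ M : ModuleCat.{u} R, Module.Finite R M → Subsingleton (Abelian.Ext M F (n + 1))) :
    HasInjectiveDimensionLT F (n + 1) := by
  induction n generalizing F with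
  | zero => exact injective_iff_hasInjectiveDimensionLT_one.1 (injective_of_ext_one_finite h)
  | succ n ih =>
    have hs := isSES_cokernel_π (Injective.ι F)
    exact (hs.2.hasInjectiveDimensionLT_X₃_iff n inferInstance).1 (ih fun M hM =>
      hs.ext_coeff_right (HasInjectiveDimensionLT.subsingleton _ 1 (n + 1) (by lia) M) (h M hM))

end Ext

theorem FlatOnCosyzygies.hasInjectiveDimensionLT [IsNoetherianRing R] {F : ModuleCat.{u} R} {n : ℕ}
    (hR : HasInjectiveDimensionLT (ModuleCat.of R R) (n + 1)) (hF : FlatOnCosyzygies 0 F) :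
    HasInjectiveDimensionLT F (n + 1) := by
  let := HasExt.standard (ModuleCat.{u} R)
  refine hasInjectiveDimensionLT_of_ext_finite fun M hM => subsingleton_of_forall_eq 0 fun e => ?_
  obtain ⟨k, e', q, rfl⟩ := hF.exists_ext_factorization M e
  have := hasInjectiveDimensionLT_finFree hR k
  rw [e'.eq_zero_of_hasInjectiveDimensionLT (n + 1) le_rfl, Ext.zero_comp]

theorem FlatOnCosyzygies.hasProjectiveDimensionLT [IsNoetherianRing R] [IsNoetherianRing Rᵐᵒᵖ]
    {n : ℕ} (hR : HasInjectiveDimensionLT (ModuleCat.of R R) (n + 1)) {k : ℕ}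
    {N : ModuleCat.{u} R} (hN : FlatOnCosyzygies k N) : HasProjectiveDimensionLT N (k + n + 1) := by
  induction k generalizing N with
  | zero =>
    rw [Nat.zero_add]
    exact hasProjectiveDimensionLT_of_syzygies (fun _ hN => hN.hasInjectiveDimensionLT hR)
      (fun hs hP hN => hs.flatOnCosyzygies hP (hN.of_zero 1)) hN
  | succ k ih =>
    obtain ⟨K, P, f, g, hs, hP⟩ := exists_isSES_projective N
    rw [show k + 1 + n + 1 = k + n + 1 + 1 by lia]
    exact (hs.2.hasProjectiveDimensionLT_X₃_iff (k + n) hP).2 (ih (hs.flatOnCosyzygies hP hN))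

theorem exists_dimension_bound [IsNoetherianRing R] [IsNoetherianRing Rᵐᵒᵖ]
    (hinjL : ∃ n, CoHat Injective n (ModuleCat.of R R))
    (hinjR : ∃ n, CoHat Injective n (ModuleCat.of Rᵐᵒᵖ Rᵐᵒᵖ)) :
    ∃ d : ℕ, (∀ E : ModuleCat.{u} R, Injective E → HasProjectiveDimensionLT E (d + 1)) ∧
      ∀ P : ModuleCat.{u} R, Projective P → HasInjectiveDimensionLT P (d + 1) := by
  obtain ⟨n, hn⟩ := hinjL
  obtain ⟨m, hm⟩ := hinjR
  have hR := hn.hasInjectiveDimensionLT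
  refine ⟨m + 2 + n, fun E _ => (flatOnCosyzygies_of_injective hm E).hasProjectiveDimensionLT hR,
    fun P _ => ?_⟩
  have := (flatOnCosyzygies_of_projective P 0).hasInjectiveDimensionLT hR
  exact hasInjectiveDimensionLT_of_ge P (n + 1) _ (by lia)

end Dimensions

/-! ### The Hovey twin cotorsion pair -/

/-- If `R` is an Iwanaga–Gorenstein ring (left and right noetherian, and of
finite self-injective dimension on both sides), then `((P(R), R-Mod), (GP(R), P(R)^))` is a
Hovey twin cotorsion pair on `R`-Mod, where `P(R)^` is the class of modules of finite
projective dimension. -/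
theorem statement15 (R : Type u) [Ring R] [IsNoetherianRing R] [IsNoetherianRing Rᵐᵒᵖ]
    [HasExt.{w} (ModuleCat.{u} R)]
    (hinjL : ∃ n, CoHat (C := ModuleCat.{u} R) (fun I => Injective I) n (ModuleCat.of R R))
    (hinjR : ∃ n, CoHat (C := ModuleCat.{u} Rᵐᵒᵖ) (fun I => Injective I) n
      (ModuleCat.of Rᵐᵒᵖ Rᵐᵒᵖ)) :
    CotorsionPairOn (C := ModuleCat.{u} R)
      (fun _ => True) (fun P => Projective P) (fun _ => True) ∧
    CotorsionPairOn (C := ModuleCat.{u} R) (fun _ => True)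
      (GClass (fun P => Projective P) (fun P => Projective P))
      (HatAll (fun P => Projective P)) ∧
    (∀ M N : ModuleCat.{u} R, Projective M → HatAll (fun P => Projective P) N →
      Subsingleton (Abelian.Ext M N 1)) ∧
    (∀ M : ModuleCat.{u} R,
      ConeCls (HatAll (fun P => Projective P)) (fun P => Projective P) M ↔
      CoConeCls (HatAll (fun P => Projective P)) (fun P => Projective P) M) := by
  obtain ⟨d, hI, hP⟩ := exists_dimension_bound hinjL hinjR
  exact ⟨cotorsionPairOn_projective, cotorsionPairOn_gorensteinProjective hI hP,
    fun M N _ hN => leftPerp_of_projective _ M N hN 1 le_rfl,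
    fun _ => coneCls_hatAll_projective_iff.trans coConeCls_hatAll_projective_iff.symm⟩

end FrobeniusPaper
end

section
/- Let (X, W) be a left Frobenius pair in a triangulated category T. Then X̂ is the smallest thick triangulated subcategory of T containing X; that is, X̂ is a strictly full triangulated subcategory of T closed under direct summands, and it is contained in every such subcategory containing X. -/
/-!
Let `X[n]` be the subcategory of all `M` with `M⟦-n⟧ ∈ X`; this is `X.shift (-n)`, with the opposite
sign. The cocone of `0 ⟶ M` is `M⟦-1⟧`, so closure under cocones makes `X` stable under the shift by
`-1`, and the `X[n]` form an increasing chain. A triangle `K ⟶ E ⟶ M` exhibits `M` as an extension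
of `K⟦1⟧` by `E`, whence `X̂ₙ ⊆ X[n]` by induction on `n`; the triangles `M⟦-1⟧ ⟶ 0 ⟶ M` give the
converse. Hence `X̂ = ⋃ₙ X[n]` is the closure of `X` under all shifts, which is contained in every
triangulated subcategory containing `X`. As the union of a chain, it inherits closure under
extensions and under retracts from its members.
-/

open CategoryTheory CategoryTheory.Limits CategoryTheory.Pretriangulated ZeroObject

universe v u

namespace FrobeniusPaperTri

variable {T : Type u} [Category.{v} T] [HasZeroObject T] [HasShift T ℤ] [Preadditive T]
  [∀ n : ℤ, (shiftFunctor T n).Additive] [Pretriangulated T]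

/-- A "subcategory" of the triangulated category `T`: a full additive subcategory, regarded
as the membership predicate on objects, closed under isomorphisms and direct summands. -/
structure IsTriSubcat (X : T → Prop) : Prop where
  zero : X 0
  iso_closed : ∀ {A B : T}, (A ≅ B) → X A → X B
  summand_closed : ∀ {A M : T} (i : A ⟶ M) (p : M ⟶ A), i ≫ p = 𝟙 A → X M → X A

/-- `TriHat X n M` : `M ∈ X̂ₙ`, i.e. there are distinguished triangles
`K_{i+1} → X_i → K_i → K_{i+1}[1]` for `0 ≤ i ≤ n-1` with `K₀ = M`, all `X_i ∈ X` and
`K_n ∈ X`. -/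
def TriHat (X : T → Prop) : ℕ → T → Prop
  | 0, M => X M
  | (n + 1), M => ∃ (K E : T) (f : K ⟶ E) (g : E ⟶ M) (h : M ⟶ K⟦(1 : ℤ)⟧),
      (Triangle.mk f g h ∈ distTriang T) ∧ X E ∧ TriHat X n K

/-- `M ∈ X̂ = ⋃ₙ X̂ₙ`. -/
def TriHatAll (X : T → Prop) (M : T) : Prop := ∃ n, TriHat X n M

/-- A left Frobenius pair `(X, W)` in the triangulated category `T`. -/
structure TriLeftFrobenius (X W : T → Prop) : Prop where
  subX : IsTriSubcat X
  subW : IsTriSubcat W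
  /-- `X` is closed under extensions. -/
  extClosed : ∀ ⦃A B M : T⦄ (f : A ⟶ B) (g : B ⟶ M) (h : M ⟶ A⟦(1 : ℤ)⟧),
    (Triangle.mk f g h ∈ distTriang T) →
    X A → X M → X B
  /-- `X` is closed under cocones of deflations. -/
  coconeClosed : ∀ ⦃A B M : T⦄ (f : A ⟶ B) (g : B ⟶ M) (h : M ⟶ A⟦(1 : ℤ)⟧),
    (Triangle.mk f g h ∈ distTriang T) →
    X B → X M → X A
  /-- `W ⊆ X`. -/
  WsubX : ∀ M, W M → X M
  /-- `W` is a cogenerator for `X`: every `M ∈ X` fits in a distinguished triangle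
  `M → W₀ → X' → M[1]` with `W₀ ∈ W`, `X' ∈ X`. -/
  cogen : ∀ M, X M → ∃ (W₀ X' : T) (f : M ⟶ W₀) (g : W₀ ⟶ X') (h : X' ⟶ M⟦(1 : ℤ)⟧),
    (Triangle.mk f g h ∈ distTriang T) ∧ W W₀ ∧ X X'
  /-- `W ⊆ X^⊥`: `Hom(M, N[i]) = 0` for `i ≥ 1`, `M ∈ X`, `N ∈ W`. -/
  perp : ∀ M N, X M → W N → ∀ i : ℤ, 1 ≤ i → ∀ f : M ⟶ N⟦i⟧, f = 0

/-- A thick (strictly full) triangulated subcategory of `T`, closed under direct summands. -/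
structure IsThickTriSub (S : T → Prop) : Prop where
  zero : S 0
  iso_closed : ∀ {A B : T}, (A ≅ B) → S A → S B
  shift_closed : ∀ (M : T) (n : ℤ), S M → S (M⟦n⟧)
  ext_closed : ∀ ⦃A B M : T⦄ (f : A ⟶ B) (g : B ⟶ M) (h : M ⟶ A⟦(1 : ℤ)⟧),
    (Triangle.mk f g h ∈ distTriang T) →
    S A → S B → S M
  summand_closed : ∀ {A M : T} (i : A ⟶ M) (p : M ⟶ A), i ≫ p = 𝟙 A → S M → S A

/-- Membership in `Thick(X)`, the smallest thick triangulated subcategory containing `X`. -/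
def triThickClosure (X : T → Prop) (M : T) : Prop :=
  ∀ S : T → Prop, IsThickTriSub S → (∀ N, X N → S N) → S M

section Shift

variable {C : Type u} [Category.{v} C] (P : ObjectProperty C)

lemma isStableUnderRetracts_shift {A : Type*} [AddMonoid A] [HasShift C A]
    [P.IsStableUnderRetracts] (a : A) : (P.shift a).IsStableUnderRetracts where
  of_retract r hY := P.prop_of_retract (r.map (shiftFunctor C a)) hY

lemma isStableUnderRetracts_shiftClosure {G : Type*} [AddGroup G] [HasShift C G]
    [P.IsStableUnderRetracts] : (P.shiftClosure G).IsStableUnderRetracts where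
  of_retract r hY := by
    simp only [P.shiftClosure_eq_iSup, ObjectProperty.prop_iSup_iff] at hY ⊢
    obtain ⟨a, ha⟩ := hY
    have := isStableUnderRetracts_shift P a
    exact ⟨a, (P.shift a).prop_of_retract r ha⟩

lemma antitone_shift [HasShift C ℤ] [P.IsClosedUnderIsomorphisms]
    [P.IsStableUnderShiftBy (-1 : ℤ)] : Antitone fun n : ℤ ↦ P.shift n := by
  refine antitone_int_of_succ_le fun n M hM ↦ ?_
  rw [← P.shift_shift (n + 1) (-1) n (by ring)]
  exact P.le_shift (-1) _ hM

end Shift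

section Subcategory

variable {C : Type u} [Category.{v} C] [HasZeroObject C] {P : ObjectProperty C}

lemma IsTriSubcat.containsZero (hP : IsTriSubcat P) : P.ContainsZero :=
  ⟨0, isZero_zero C, hP.zero⟩

lemma IsTriSubcat.isStableUnderRetracts (hP : IsTriSubcat P) : P.IsStableUnderRetracts :=
  ⟨fun r hM ↦ hP.summand_closed r.i r.r r.retract hM⟩

end Subcategory

lemma isThickTriSub_iff {S : ObjectProperty T} :
    IsThickTriSub S ↔ S.IsTriangulated ∧ S.IsStableUnderRetracts := by
  constructor
  · intro hS
    have hsub : IsTriSubcat S := ⟨hS.zero, hS.iso_closed, hS.summand_closed⟩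
    have hzero : S.ContainsZero := hsub.containsZero
    have hretract : S.IsStableUnderRetracts := hsub.isStableUnderRetracts
    have hshift : S.IsStableUnderShift ℤ := ⟨fun n ↦ ⟨fun M ↦ hS.shift_closed M n⟩⟩
    have hcone : S.IsTriangulatedClosed₃ := .mk' fun _ hd ↦ hS.ext_closed _ _ _ hd
    have hext : S.IsTriangulatedClosed₂ := .of_isTriangulatedClosed₃
    exact ⟨{}, hretract⟩
  · rintro ⟨_, _⟩
    exact {
      zero := S.prop_zero
      iso_closed := S.prop_of_iso
      shift_closed := fun M n ↦ S.le_shift n M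
      ext_closed := fun _ _ _ _ _ _ hd ↦ S.ext_of_isTriangulatedClosed₃ _ hd
      summand_closed := fun i p hip ↦ S.prop_of_retract ⟨i, p, hip⟩ }

section Hat

variable (P : ObjectProperty T) [P.IsClosedUnderIsomorphisms]

lemma isStableUnderShiftBy_neg_one_of_isTriangulatedClosed₁ [P.ContainsZero]
    [P.IsTriangulatedClosed₁] : P.IsStableUnderShiftBy (-1 : ℤ) where
  le_shift M hM := P.ext_of_isTriangulatedClosed₁ _
    (inv_rot_of_distTriang _ (contractible_distinguished₁ M)) P.prop_zero hM

lemma isTriangulatedClosed₂_shift [P.IsTriangulatedClosed₂] (n : ℤ) :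
    (P.shift n).IsTriangulatedClosed₂ :=
  .mk' fun t hd h₁ h₃ ↦
    P.ext_of_isTriangulatedClosed₂ _ (Triangle.shift_distinguished t hd n) h₁ h₃

lemma shift_le_triHat [P.ContainsZero] (n : ℕ) : P.shift (-n : ℤ) ≤ TriHat P n := by
  induction n with
  | zero => simp [TriHat]
  | succ n ih =>
    intro M hM
    rw [← P.shift_shift (-1) (-n : ℤ) _ (by push_cast; ring)] at hM
    exact ⟨_, _, _, _, _, inv_rot_of_distTriang _ (contractible_distinguished₁ M),
      P.prop_zero, ih _ hM⟩

variable [P.IsTriangulatedClosed₂] [P.IsStableUnderShiftBy (-1 : ℤ)]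

lemma triHat_le_shift (n : ℕ) : TriHat P n ≤ P.shift (-n : ℤ) := by
  induction n with
  | zero => simp [TriHat]
  | succ n ih =>
    rintro M ⟨K, E, f, g, h, hd, hE, hK⟩
    have hE' : P.shift (-(n + 1 : ℕ) : ℤ) E :=
      antitone_shift P (by lia : (-(n + 1 : ℕ) : ℤ) ≤ 0) E (by simpa using hE)
    have hK' : P.shift (-(n + 1 : ℕ) : ℤ) (K⟦(1 : ℤ)⟧) := by
      rw [← P.shift_shift 1 (-(n + 1 : ℕ) : ℤ) (-n) (by push_cast; ring)] at ih
      exact ih K hK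
    have := isTriangulatedClosed₂_shift P (-(n + 1 : ℕ) : ℤ)
    exact (P.shift _).ext_of_isTriangulatedClosed₂ _ (rot_of_distTriang _ hd) hE' hK'

lemma triHatAll_eq_shiftClosure [P.ContainsZero] : TriHatAll P = P.shiftClosure ℤ := by
  ext M
  rw [P.shiftClosure_eq_iSup, ObjectProperty.prop_iSup_iff]
  constructor
  · rintro ⟨n, hn⟩
    exact ⟨-n, triHat_le_shift P n M hn⟩
  · rintro ⟨a, ha⟩
    have hle : (-a.natAbs : ℤ) ≤ a := by lia
    exact ⟨a.natAbs, shift_le_triHat P _ M (antitone_shift P hle M ha)⟩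

lemma isTriangulatedClosed₂_shiftClosure : (P.shiftClosure ℤ).IsTriangulatedClosed₂ := by
  refine .mk' fun t hd h₁ h₃ ↦ ?_
  simp only [P.shiftClosure_eq_iSup, ObjectProperty.prop_iSup_iff] at h₁ h₃ ⊢
  obtain ⟨a, ha⟩ := h₁
  obtain ⟨b, hb⟩ := h₃
  have := isTriangulatedClosed₂_shift P (min a b)
  exact ⟨min a b, (P.shift _).ext_of_isTriangulatedClosed₂ t hd
    (antitone_shift P (min_le_left a b) _ ha) (antitone_shift P (min_le_right a b) _ hb)⟩

lemma isTriangulated_shiftClosure [P.ContainsZero] : (P.shiftClosure ℤ).IsTriangulated where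
  exists_zero := ⟨0, isZero_zero T, P.le_shiftClosure _ P.prop_zero⟩
  ext₂' := (isTriangulatedClosed₂_shiftClosure P).ext₂'

end Hat

theorem statement16_general (X : ObjectProperty T) (hX : IsTriSubcat X)
    (hext : ∀ ⦃A B M : T⦄ (f : A ⟶ B) (g : B ⟶ M) (h : M ⟶ A⟦(1 : ℤ)⟧),
      (Triangle.mk f g h ∈ distTriang T) → X A → X M → X B)
    (hcocone : ∀ ⦃A B M : T⦄ (f : A ⟶ B) (g : B ⟶ M) (h : M ⟶ A⟦(1 : ℤ)⟧),
      (Triangle.mk f g h ∈ distTriang T) → X B → X M → X A) :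
    IsThickTriSub (TriHatAll X) ∧ (∀ M, X M → TriHatAll X M) ∧
      (∀ S : T → Prop, IsThickTriSub S → (∀ N, X N → S N) →
        ∀ M, TriHatAll X M → S M) := by
  have : X.ContainsZero := hX.containsZero
  have : X.IsStableUnderRetracts := hX.isStableUnderRetracts
  have : X.IsTriangulatedClosed₁ := .mk' fun _ hd ↦ hcocone _ _ _ hd
  have : X.IsTriangulatedClosed₂ := .mk' fun _ hd ↦ hext _ _ _ hd
  have := isStableUnderShiftBy_neg_one_of_isTriangulatedClosed₁ X
  rw [triHatAll_eq_shiftClosure X]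
  refine ⟨isThickTriSub_iff.2
    ⟨isTriangulated_shiftClosure X, isStableUnderRetracts_shiftClosure X⟩,
    X.le_shiftClosure, fun S hS hXS ↦ ?_⟩
  obtain ⟨_, _⟩ := isThickTriSub_iff.1 hS
  exact (X.shiftClosure_le_iff S).2 hXS

/-- For a left Frobenius pair `(X, W)` in a triangulated category `T`,
`X̂` is the smallest thick triangulated subcategory of `T` containing `X`. -/
theorem statement16 {T : Type u} [Category.{v} T] [HasZeroObject T] [HasShift T ℤ]
    [Preadditive T] [∀ n : ℤ, (shiftFunctor T n).Additive] [Pretriangulated T]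
    (X W : T → Prop) (hF : TriLeftFrobenius X W) :
    IsThickTriSub (TriHatAll X) ∧ (∀ M, X M → TriHatAll X M) ∧
      (∀ S : T → Prop, IsThickTriSub S → (∀ N, X N → S N) →
        ∀ M, TriHatAll X M → S M) :=
  statement16_general X hF.subX hF.extClosed hF.coconeClosed

end FrobeniusPaperTri
end
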